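/- arXiv:2411.00679 — 2 statements merged into one kernel-verified Lean document; each statement's English description precedes it below -/
import Mathlib

section
/- Extension Lemma: Let G be a finite simple graph, L a list assignment for G, and let v be a vertex of G with |L(v)| ≥ d(v) + 2, where d(v) is the degree of v in G. Let α and β be L-colorings of G, let G' = G − v, and let α', β' be the restrictions of α and β to G'. Suppose σ' is a recoloring sequence in G' from α' to β' in which the total number of recoloring steps performed at vertices of N(v) is s. Then σ' extends to a recoloring sequence σ in G from α to β that recolors v at most ⌈s/(|L(v)| − d(v) − 1)⌉ + 1 times and recolors every vertex other than v exactly as many times as σ' does. -/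
def IsLColoring {V : Type} (G : SimpleGraph V) (L : V → Finset ℕ) (φ : V → ℕ) : Prop :=
  (∀ v, φ v ∈ L v) ∧ ∀ ⦃u w : V⦄, G.Adj u w → φ u ≠ φ w

def recolorCount {V : Type} {m : ℕ} (φ : Fin (m + 1) → V → ℕ) (v : V) : ℕ :=
  (Finset.univ.filter fun i : Fin m => φ i.castSucc v ≠ φ i.succ v).card

def IsRecolSeq {V : Type} (G : SimpleGraph V) (L : V → Finset ℕ) {m : ℕ}
    (φ : Fin (m + 1) → V → ℕ) (α β : V → ℕ) : Prop :=
  φ 0 = α ∧ φ (Fin.last m) = β ∧ (∀ i, IsLColoring G L (φ i)) ∧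
    ∀ i : Fin m, ∃! v : V, φ i.castSucc v ≠ φ i.succ v

/-!
Recolor `v` lazily: follow the given sequence on `G − v` until a neighbor of `v` is about to take
the current color of `v`, and only then move `v`. The colors excluded for `v` at that moment are
the at most `d(v)` colors present on `N(v)`; avoiding moreover the next `|L(v)| − d(v) − 1` colors
to be used on `N(v)` still leaves a choice. So `v` is recolored at most once per
`|L(v)| − d(v) − 1` steps on `N(v)`, and once more at the end to reach its target color.
-/

section Arithmetic

theorem natCeil_natCast_div (n k : ℕ) : ⌈(n : ℚ) / k⌉₊ = n ⌈/⌉ k := by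
  rcases k.eq_zero_or_pos with rfl | hk
  · simp
  refine eq_of_forall_ge_iff fun m => ?_
  rw [Nat.ceil_le, div_le_iff₀' (by exact_mod_cast hk), ceilDiv_le_iff_le_mul hk]
  exact_mod_cast Iff.rfl

theorem sub_ceilDiv_add_one_le {n k : ℕ} (hn : 0 < n) (hk : 0 < k) :
    (n - k) ⌈/⌉ k + 1 ≤ n ⌈/⌉ k := by
  have hle : n ≤ k * (n ⌈/⌉ k) := le_smul_ceilDiv hk
  have hpos : 0 < n ⌈/⌉ k := Nat.pos_of_mul_pos_left (hn.trans_le hle)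
  exact Nat.add_le_of_le_sub hpos
    ((ceilDiv_le_iff_le_mul hk).2 (by rw [Nat.mul_sub_one]; omega))

theorem ceilDiv_le_ceilDiv_right {m n : ℕ} (h : m ≤ n) (k : ℕ) : m ⌈/⌉ k ≤ n ⌈/⌉ k :=
  Nat.div_le_div_right (Nat.sub_le_sub_right (Nat.add_le_add_right h k) 1)

end Arithmetic

theorem sum_countP_eq_countP_mem {A W : Type*} [DecidableEq W] (t : Finset W) (f : A → W)
    (l : List A) : ∑ w ∈ t, l.countP (f · = w) = l.countP (f · ∈ t) := by
  induction l with
  | nil => simp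
  | cons a l ih => simp [List.countP_cons, Finset.sum_add_distrib, ih]

theorem existsUnique_ne_iff_exists_eq_update {W A : Type*} [DecidableEq W]
    {f g : W → A} : (∃! w, f w ≠ g w) ↔ ∃ w c, f w ≠ c ∧ g = Function.update f w c := by
  constructor
  · rintro ⟨w, hw, huniq⟩
    refine ⟨w, g w, hw, Function.eq_update_iff.2 ⟨rfl, fun x hx => ?_⟩⟩
    exact (not_ne_iff.1 (mt (huniq x) hx)).symm
  · rintro ⟨w, c, hc, rfl⟩
    refine ⟨w, by simpa using hc, fun x hx => ?_⟩
    by_contra hxw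
    exact hx (Function.update_of_ne hxw c f).symm

section MoveSequences

variable {V : Type} {G : SimpleGraph V} {L : V → Finset ℕ}

theorem isRecolSeq_cons_iff {m : ℕ} {α β : V → ℕ} {φ : Fin (m + 1) → V → ℕ} :
    IsRecolSeq G L (Fin.cons α φ : Fin (m + 2) → V → ℕ) α β ↔
      IsLColoring G L α ∧ (∃! w, α w ≠ φ 0 w) ∧ IsRecolSeq G L φ (φ 0) β := by
  simp only [IsRecolSeq, Fin.forall_fin_succ, ← Fin.succ_last, Fin.castSucc_zero,
    ← Fin.succ_castSucc, Fin.cons_zero, Fin.cons_succ]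
  tauto

theorem recolorCount_cons {m : ℕ} (α : V → ℕ) (φ : Fin (m + 1) → V → ℕ) (w : V) :
    recolorCount (Fin.cons α φ : Fin (m + 2) → V → ℕ) w =
      recolorCount φ w + if α w ≠ φ 0 w then 1 else 0 := by
  simp only [recolorCount, Finset.card_filter]
  rw [Fin.sum_univ_succ, add_comm]
  rfl

variable [DecidableEq V]

variable (G L) in
/-- `IsMoveSeq G L α l β`: performing the moves `(vertex, new color)` of `l` in order is a
recoloring sequence from `α` to `β`. This is `IsRecolSeq` in a form suited to induction and to the
insertion of further moves. -/
inductive IsMoveSeq : (V → ℕ) → List (V × ℕ) → (V → ℕ) → Prop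
  | nil {α : V → ℕ} (hα : IsLColoring G L α) : IsMoveSeq α [] α
  | cons {α β : V → ℕ} {u : V} {c : ℕ} {l : List (V × ℕ)} (hα : IsLColoring G L α)
      (hc : α u ≠ c) (hl : IsMoveSeq (Function.update α u c) l β) : IsMoveSeq α ((u, c) :: l) β

theorem IsMoveSeq.isLColoring_left {α β : V → ℕ} {l : List (V × ℕ)} (h : IsMoveSeq G L α l β) :
    IsLColoring G L α := by
  cases h <;> assumption

theorem IsRecolSeq.exists_isMoveSeq {m : ℕ} {φ : Fin (m + 1) → V → ℕ} {α β : V → ℕ}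
    (h : IsRecolSeq G L φ α β) :
    ∃ l, IsMoveSeq G L α l β ∧ ∀ w, l.countP (·.1 = w) = recolorCount φ w := by
  induction m generalizing α with
  | zero =>
    obtain ⟨rfl, rfl, hφ, -⟩ := h
    exact ⟨[], .nil (hφ 0), fun w => by simp [recolorCount]⟩
  | succ m ih =>
    obtain rfl := h.1
    cases φ using Fin.consCases with | cons α φ =>
    obtain ⟨hα, hstep, htail⟩ := isRecolSeq_cons_iff.1 h
    obtain ⟨u, c, hc, hu⟩ := existsUnique_ne_iff_exists_eq_update.1 hstep
    obtain ⟨l, hl, hcount⟩ := ih htail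
    refine ⟨(u, c) :: l, .cons hα hc (hu ▸ hl), fun w => ?_⟩
    rw [recolorCount_cons, List.countP_cons, hcount, hu]
    rcases eq_or_ne w u with rfl | hw <;> simp [*, Ne.symm]

theorem IsMoveSeq.exists_isRecolSeq {α β : V → ℕ} {l : List (V × ℕ)}
    (h : IsMoveSeq G L α l β) :
    ∃ (m : ℕ) (φ : Fin (m + 1) → V → ℕ), IsRecolSeq G L φ α β ∧
      ∀ w, recolorCount φ w = l.countP (·.1 = w) := by
  induction h with
  | @nil α hα =>
    exact ⟨0, fun _ => α, ⟨rfl, rfl, fun _ => hα, fun i => i.elim0⟩,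
      fun w => by simp [recolorCount]⟩
  | @cons α β u c l hα hc _ ih =>
    obtain ⟨m, φ, hφ, hcount⟩ := ih
    have hφ0 : φ 0 = Function.update α u c := hφ.1
    refine ⟨m + 1, Fin.cons α φ, isRecolSeq_cons_iff.2 ⟨hα, ?_, hφ0 ▸ hφ⟩, fun w => ?_⟩
    · exact existsUnique_ne_iff_exists_eq_update.2 ⟨u, c, hc, hφ0⟩
    · rw [recolorCount_cons, List.countP_cons, hcount, hφ0]
      rcases eq_or_ne w u with rfl | hw <;> simp [*, Ne.symm]

end MoveSequences

section VertexDeletion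

variable {V : Type} {G : SimpleGraph V} {L : V → Finset ℕ} {v : V} [DecidableEq V]

theorem update_self_comp_coe_ne (φ : V → ℕ) (v : V) (c : ℕ) :
    Function.update φ v c ∘ ((↑) : {u | u ≠ v} → V) = φ ∘ (↑) :=
  Function.update_comp_eq_of_forall_ne _ _ fun u => u.2

theorem IsLColoring.update_of_forall_ne {φ : V → ℕ} (hφ : IsLColoring G L φ) {c : ℕ}
    (hc : c ∈ L v) (hne : ∀ w, G.Adj v w → c ≠ φ w) :
    IsLColoring G L (Function.update φ v c) := by
  refine ⟨fun u => ?_, fun u w huw => ?_⟩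
  · rcases eq_or_ne u v with rfl | hu
    · simpa using hc
    · simpa [hu] using hφ.1 u
  · rcases eq_or_ne u v with rfl | hu
    · simpa [huw.ne'] using hne w huw
    rcases eq_or_ne w v with rfl | hw
    · simpa [hu] using (hne u huw.symm).symm
    · simpa [hu, hw] using hφ.2 huw

theorem IsLColoring.update_of_induce_ne {φ : V → ℕ} (hφ : IsLColoring G L φ)
    {u : {u | u ≠ v}} {c : ℕ}
    (hu : IsLColoring (G.induce {u | u ≠ v}) (L ∘ (↑)) (Function.update (φ ∘ (↑)) u c))
    (hv : G.Adj v u → φ v ≠ c) : IsLColoring G L (Function.update φ u c) := by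
  refine hφ.update_of_forall_ne (by simpa using hu.1 u) fun w hw => ?_
  rcases eq_or_ne w v with rfl | hwv
  · exact (hv hw.symm).symm
  · have huw : (⟨w, hwv⟩ : {u | u ≠ v}) ≠ u := fun h => hw.ne' (congrArg Subtype.val h)
    simpa [huw] using @hu.2 u ⟨w, hwv⟩ hw

theorem IsLColoring.exists_update_notMem [Fintype (G.neighborSet v)] {φ : V → ℕ}
    (hφ : IsLColoring G L φ) {F : List ℕ} (hF : G.degree v + F.length < (L v).card) :
    ∃ c ∉ F, IsLColoring G L (Function.update φ v c) := by
  have hcard : ((G.neighborFinset v).image φ ∪ F.toFinset).card < (L v).card :=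
    (Finset.card_union_le _ _).trans_lt <|
      (Nat.add_le_add Finset.card_image_le F.toFinset_card_le).trans_lt hF
  obtain ⟨c, hcL, hc⟩ := Finset.exists_mem_notMem_of_card_lt_card hcard
  simp only [Finset.mem_union, Finset.mem_image, SimpleGraph.mem_neighborFinset,
    List.mem_toFinset, not_or, not_exists, not_and] at hc
  exact ⟨c, hc.2, hφ.update_of_forall_ne hcL fun w hw => Ne.symm (hc.1 w hw)⟩

end VertexDeletion

section NeighborColors

variable {V : Type} {G : SimpleGraph V} {v : V} [DecidablePred (G.Adj v)] {u : {u | u ≠ v}}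
  {c : ℕ} {l : List ({u | u ≠ v} × ℕ)}

variable (G v) in
/-- The colors that the moves `l` on `G − v` successively give to neighbors of `v`, repetitions
included. -/
def neighborColors (l : List ({u | u ≠ v} × ℕ)) : List ℕ :=
  (l.filter fun p => G.Adj v p.1).map Prod.snd

theorem neighborColors_cons_of_adj (hu : G.Adj v u) :
    neighborColors G v ((u, c) :: l) = c :: neighborColors G v l := by
  simp [neighborColors, hu]

theorem neighborColors_cons_of_not_adj (hu : ¬G.Adj v u) :
    neighborColors G v ((u, c) :: l) = neighborColors G v l := by
  simp [neighborColors, hu]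

theorem length_neighborColors [DecidableEq V] (N : Finset {u | u ≠ v})
    (hN : ∀ u, u ∈ N ↔ G.Adj v u) :
    (neighborColors G v l).length = ∑ u ∈ N, l.countP (·.1 = u) := by
  simp only [neighborColors, List.length_map, ← List.countP_eq_length_filter,
    sum_countP_eq_countP_mem, hN]

theorem exists_notMem_take_neighborColors {a j : ℕ}
    (ha : a ∉ (neighborColors G v ((u, c) :: l)).take j) :
    ∃ i, a ∉ (neighborColors G v l).take i ∧
      (neighborColors G v l).length - i ≤ (neighborColors G v ((u, c) :: l)).length - j := by
  by_cases hu : G.Adj v u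
  · rw [neighborColors_cons_of_adj hu] at ha ⊢
    cases j with
    | zero => exact ⟨0, by simp, by simp⟩
    | succ i => exact ⟨i, by simp_all, by simp⟩
  · rw [neighborColors_cons_of_not_adj hu] at ha ⊢
    exact ⟨j, ha, le_rfl⟩

end NeighborColors

section Extension

variable {V : Type} [DecidableEq V] {G : SimpleGraph V} {L : V → Finset ℕ} {v : V}
  {α β : V → ℕ} {u : {u | u ≠ v}} {c n n' : ℕ} {l : List ({u | u ≠ v} × ℕ)}

variable (G L v) in
/-- The moves `l` on `G − v` extend, by inserting at most `n` moves at `v`, to a recoloring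
sequence of `G` from `α` to `β`. -/
def HasExtension (α : V → ℕ) (l : List ({u | u ≠ v} × ℕ)) (β : V → ℕ) (n : ℕ) : Prop :=
  ∃ l', IsMoveSeq G L α l' β ∧ l'.filter (·.1 ≠ v) = l.map (Prod.map (↑) id) ∧
    l'.countP (·.1 = v) ≤ n

namespace HasExtension

theorem mono (h : HasExtension G L v α l β n) (hn : n ≤ n') : HasExtension G L v α l β n' :=
  let ⟨l', hl', hfilter, hcount⟩ := h
  ⟨l', hl', hfilter, hcount.trans hn⟩

theorem of_comp_coe_eq (hα : IsLColoring G L α) (hβ : IsLColoring G L β)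
    (hαβ : α ∘ ((↑) : {u | u ≠ v} → V) = β ∘ (↑)) : HasExtension G L v α [] β 1 := by
  have hβα : β = Function.update α v (β v) :=
    Function.eq_update_iff.2 ⟨rfl, fun u hu => (congrFun hαβ ⟨u, hu⟩).symm⟩
  by_cases hv : α v = β v
  · obtain rfl : β = α := by rw [hβα, ← hv, Function.update_eq_self]
    exact ⟨[], .nil hα, by simp⟩
  · exact ⟨[(v, β v)], .cons hα hv (hβα ▸ .nil hβ), by simp⟩

theorem of_update_self (hα : IsLColoring G L α) (hc : α v ≠ c)
    (h : HasExtension G L v (Function.update α v c) l β n) : HasExtension G L v α l β (n + 1) :=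
  let ⟨l', hl', hfilter, hcount⟩ := h
  ⟨(v, c) :: l', .cons hα hc hl', by simpa using hfilter, by simpa using hcount⟩

theorem cons (hα : IsLColoring G L α) (hc : α u ≠ c)
    (h : HasExtension G L v (Function.update α u c) l β n) :
    HasExtension G L v α ((u, c) :: l) β n :=
  let ⟨l', hl', hfilter, hcount⟩ := h
  have hu : (u : V) ≠ v := u.2
  ⟨(u, c) :: l', .cons hα hc hl', by simpa [hu] using hfilter, by simpa [hu] using hcount⟩

theorem exists_isRecolSeq (h : HasExtension G L v α l β n) :
    ∃ (m : ℕ) (φ : Fin (m + 1) → V → ℕ), IsRecolSeq G L φ α β ∧ recolorCount φ v ≤ n ∧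
      ∀ u : {u | u ≠ v}, recolorCount φ u = l.countP (·.1 = u) := by
  obtain ⟨l', hl', hfilter, hcount⟩ := h
  obtain ⟨m, φ, hφ, hφcount⟩ := hl'.exists_isRecolSeq
  refine ⟨m, φ, hφ, hφcount v ▸ hcount, fun u => ?_⟩
  have hu : (u : V) ≠ v := u.2
  calc recolorCount φ u = (l'.filter (·.1 ≠ v)).countP (·.1 = (u : V)) := by
        rw [hφcount, List.countP_filter]
        exact List.countP_congr fun p _ => by simp +contextual [hu]
    _ = l.countP (·.1 = u) := by
        rw [hfilter, List.countP_map]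
        exact List.countP_congr fun p _ => by simp [Subtype.ext_iff]

end HasExtension

/-- The hypothesis on `j` is the invariant of the lazy strategy: the current color of `v` does not
conflict with the next `j` steps on `N(v)`. Choosing a new color for `v` resets `j` to `k`. -/
theorem IsMoveSeq.hasExtension [Fintype (G.neighborSet v)] [DecidablePred (G.Adj v)] {k : ℕ}
    (hk : 0 < k) (hL : G.degree v + k < (L v).card) {α' β' : {u | u ≠ v} → ℕ}
    (h : IsMoveSeq (G.induce {u | u ≠ v}) (L ∘ (↑)) α' l β') (hβ : IsLColoring G L β)
    (hββ' : β ∘ (↑) = β') {j : ℕ} (hα : IsLColoring G L α) (hαα' : α ∘ (↑) = α')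
    (hj : α v ∉ (neighborColors G v l).take j) :
    HasExtension G L v α l β (((neighborColors G v l).length - j) ⌈/⌉ k + 1) := by
  induction h generalizing α j with
  | nil =>
    exact (HasExtension.of_comp_coe_eq hα hβ (hαα'.trans hββ'.symm)).mono (Nat.le_add_left 1 _)
  | @cons α' β' u c l _ hc hl ih =>
    have extend_of_unblocked {α : V → ℕ} {j : ℕ} (hα : IsLColoring G L α) (hαα' : α ∘ (↑) = α')
        (hv : G.Adj v u → α v ≠ c) (hj : α v ∉ (neighborColors G v ((u, c) :: l)).take j) :
        HasExtension G L v α ((u, c) :: l) β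
          (((neighborColors G v ((u, c) :: l)).length - j) ⌈/⌉ k + 1) := by
      subst hαα'
      obtain ⟨i, hi, hle⟩ := exists_notMem_take_neighborColors hj
      refine .cons hα hc ((ih hββ' (hα.update_of_induce_ne hl.isLColoring_left hv) ?_ ?_).mono
        (Nat.succ_le_succ (ceilDiv_le_ceilDiv_right hle k)))
      · exact Function.update_comp_eq_of_injective _ Subtype.val_injective u c
      · rwa [Function.update_of_ne (Ne.symm u.2)]
    by_cases hblocked : G.Adj v u ∧ α v = c
    · obtain ⟨hu, rfl⟩ := hblocked
      set T := neighborColors G v ((u, α v) :: l)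
      have hT : T = α v :: neighborColors G v l := neighborColors_cons_of_adj hu
      obtain rfl : j = 0 := by
        by_contra hj0
        simp [hT, List.take_cons (Nat.pos_of_ne_zero hj0)] at hj
      obtain ⟨c, hcF, hcol⟩ := hα.exists_update_notMem (F := T.take k) <|
        hL.trans_le' (Nat.add_le_add_left (List.length_take_le k T) _)
      have hcv : α v ≠ c :=
        ne_of_mem_of_not_mem (by simp [hT, List.take_cons hk]) hcF
      refine (HasExtension.of_update_self hα hcv (extend_of_unblocked (j := k) hcol
        ((update_self_comp_coe_ne α v c).trans hαα') ?_ ?_)).mono ?_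
      · simpa using fun _ => hcv.symm
      · rwa [Function.update_self]
      · exact Nat.succ_le_succ (sub_ceilDiv_add_one_le (by simp [hT]) hk)
    · exact extend_of_unblocked hα hαα' (not_and.1 hblocked) hj

end Extension

theorem stmt_0_general {V : Type} [DecidableEq V] (G : SimpleGraph V) (L : V → Finset ℕ) (v : V)
    [Fintype (G.neighborSet v)] (hLv : G.degree v + 2 ≤ (L v).card)
    (α β : V → ℕ) (hα : IsLColoring G L α) (hβ : IsLColoring G L β)
    (m : ℕ) (φ' : Fin (m + 1) → ↥({u : V | u ≠ v}) → ℕ)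
    (hφ' : IsRecolSeq (G.induce {u : V | u ≠ v}) (fun u => L u.1) φ'
      (fun u => α u.1) (fun u => β u.1))
    (s : ℕ) (hs : s = ∑ u ∈ (G.neighborFinset v).subtype (· ≠ v), recolorCount φ' u) :
    ∃ (M : ℕ) (φ : Fin (M + 1) → V → ℕ),
      IsRecolSeq G L φ α β ∧
      (recolorCount φ v : ℤ) ≤
        ⌈(s : ℚ) / (((L v).card : ℚ) - (G.degree v : ℚ) - 1)⌉ + 1 ∧
      ∀ u : ↥({u : V | u ≠ v}), recolorCount φ u.1 = recolorCount φ' u := by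
  classical
  obtain ⟨l, hl, hcount⟩ := hφ'.exists_isMoveSeq
  obtain ⟨k, hk⟩ : ∃ k, (L v).card = G.degree v + k + 1 := ⟨(L v).card - G.degree v - 1, by omega⟩
  have hk0 : 0 < k := by omega
  have hlength : (neighborColors G v l).length = s := by
    rw [length_neighborColors ((G.neighborFinset v).subtype (· ≠ v)) (by simp), hs]
    exact Finset.sum_congr rfl fun u _ => hcount u
  obtain ⟨M, φ, hφ, hφv, hφu⟩ :=
    (hl.hasExtension hk0 (by omega) hβ rfl (j := 0) hα rfl (by simp)).exists_isRecolSeq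
  refine ⟨M, φ, hφ, ?_, fun u => (hφu u).trans (hcount u)⟩
  have hden : ((L v).card : ℚ) - G.degree v - 1 = k := by rw [hk]; push_cast; ring
  rw [hden, ← Int.natCast_ceil_eq_ceil (by positivity), natCeil_natCast_div]
  rw [hlength] at hφv
  exact_mod_cast hφv

/-- Extension Lemma: if `|L(v)| ≥ d(v) + 2` and `σ'` is a recoloring
sequence in `G − v` from `α'` to `β'` performing `s` recoloring steps on `N(v)`,
then it extends to a recoloring sequence in `G` from `α` to `β` recoloring `v` at
most `⌈s / (|L(v)| − d(v) − 1)⌉ + 1` times and every other vertex exactly as many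
times as `σ'` does. -/
theorem stmt_0 {V : Type} [Fintype V] [DecidableEq V]
    (G : SimpleGraph V) [DecidableRel G.Adj]
    (L : V → Finset ℕ) (v : V)
    (hLv : G.degree v + 2 ≤ (L v).card)
    (α β : V → ℕ) (hα : IsLColoring G L α) (hβ : IsLColoring G L β)
    (m : ℕ) (φ' : Fin (m + 1) → ↥({u : V | u ≠ v}) → ℕ)
    (hφ' : IsRecolSeq (G.induce {u : V | u ≠ v}) (fun u => L u.1) φ'
      (fun u => α u.1) (fun u => β u.1))
    (s : ℕ)
    (hs : s = ∑ u ∈ Finset.univ.filter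
      (fun u : ↥({u : V | u ≠ v}) => G.Adj v u.1), recolorCount φ' u) :
    ∃ (M : ℕ) (φ : Fin (M + 1) → V → ℕ),
      IsRecolSeq G L φ α β ∧
      (recolorCount φ v : ℤ) ≤
        ⌈(s : ℚ) / (((L v).card : ℚ) - (G.degree v : ℚ) - 1)⌉ + 1 ∧
      ∀ u : ↥({u : V | u ≠ v}), recolorCount φ u.1 = recolorCount φ' u := by
  exact stmt_0_general G L v hLv α β hα hβ m φ' hφ' s <|
    hs.trans (Finset.sum_congr (by ext; simp) fun _ _ => rfl)
end

section
/- Fix an integer k ≥ 416. Let G be a finite simple graph, L a 10-assignment for G, and α, β two L-colorings of G. Suppose G contains five distinct vertices v, w, x, y, z such that vw, wx, wy, xy, xz, yz are edges of G, d_G(v) = d_G(z) = 5, and d_G(w) = d_G(x) = d_G(y) = 6. Let S = {v, w, x, y, z}. If there exists a k-good recoloring sequence in G − S from the restriction of α to G − S to the restriction of β to G − S, then there exists a k-good recoloring sequence in G from α to β. -/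
/-!
A given recoloring sequence outside `S` is replayed. Each of its moves that gives a neighbor of
`s ∈ S` the color `c` is a demand on `s` to avoid `c`. When `s` has to move, its list still has room
for a color that avoids its neighbors and the next `m` demands (its current one included), where
`d(s) + m < 10`, so one recoloring covers `m` demands. If a neighbor `q ∈ S` stands ready to move
away as well, then the color of `q` need not be avoided, and the recoloring covers `m + 1` demands.
Such aid is passed along the gadget: `w` aids `v`, both `x` and `y` aid `w`, and `z` aids both `x`
and `y`. The vertex `z` can afford it, because with three neighbors outside `S` it faces about `3k`
demands while looking ahead at four of them at a time. The recolorings saved are enough to bring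
`S` to its target colors at the end: the vertices first leave the targets of those before them and
then take their own.
-/

theorem IsLColoring.update {V : Type} [DecidableEq V] {G : SimpleGraph V} {L : V → Finset ℕ}
    {φ : V → ℕ} {u : V} {c : ℕ} (hφ : IsLColoring G L φ) (hc : c ∈ L u)
    (hfree : ∀ t, G.Adj u t → φ t ≠ c) : IsLColoring G L (Function.update φ u c) := by
  refine ⟨fun t => ?_, fun a b hab => ?_⟩
  · obtain rfl | ht := eq_or_ne t u
    · simpa using hc
    · simpa [ht] using hφ.1 t
  · obtain rfl | ha := eq_or_ne a u
    · simpa [hab.ne'] using (hfree b hab).symm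
    · obtain rfl | hb := eq_or_ne b u
      · simpa [ha] using hfree a hab.symm
      · simpa [ha, hb] using hφ.2 hab

theorem recolorCount_succ {V : Type} {m : ℕ} (φ : Fin (m + 2) → V → ℕ) (t : V) :
    recolorCount φ t =
      recolorCount (fun i : Fin (m + 1) => φ i.succ) t + if φ 0 t ≠ φ 1 t then 1 else 0 := by
  simp only [recolorCount, Fin.card_filter_univ_succ, Fin.castSucc_zero, Fin.succ_zero_eq_one,
    ← Fin.succ_castSucc]
  by_cases h : φ 0 t = φ 1 t <;> simp [h]

namespace Recoloring

/-- A sequence of moves `ms`, each a vertex together with its new color, that leads from `φ` to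
`ψ`. Properness is only asked of the moves, so it is inherited from the starting point `φ`. -/
inductive IsRecoloring {V : Type} [DecidableEq V] (G : SimpleGraph V) (L : V → Finset ℕ) :
    (V → ℕ) → List (V × ℕ) → (V → ℕ) → Prop
  | nil (φ : V → ℕ) : IsRecoloring G L φ [] φ
  | cons {φ ψ : V → ℕ} {u : V} {c : ℕ} {ms : List (V × ℕ)} (hc : c ∈ L u) (hne : φ u ≠ c)
      (hfree : ∀ t, G.Adj u t → φ t ≠ c) (h : IsRecoloring G L (Function.update φ u c) ms ψ) :
      IsRecoloring G L φ ((u, c) :: ms) ψ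

/-- The number of times the sequence of moves `ms` recolors `t`. -/
def moveCount {V : Type} [DecidableEq V] (ms : List (V × ℕ)) (t : V) : ℕ :=
  (ms.map Prod.fst).count t

/-- `ψ` can be reached from `φ` by a sequence of moves that recolors each `t` at most `n t`
times. -/
def RecolorableWithin {V : Type} [DecidableEq V] (G : SimpleGraph V) (L : V → Finset ℕ)
    (n : V → ℕ) (φ ψ : V → ℕ) : Prop :=
  ∃ ms, IsRecoloring G L φ ms ψ ∧ ∀ t, moveCount ms t ≤ n t

section Moves

variable {V : Type} [DecidableEq V] {G : SimpleGraph V} {L : V → Finset ℕ} {φ ψ χ : V → ℕ}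

theorem moveCount_cons (u : V) (c : ℕ) (ms : List (V × ℕ)) (t : V) :
    moveCount ((u, c) :: ms) t = moveCount ms t + if u = t then 1 else 0 := by
  simp [moveCount, List.count_cons]

theorem moveCount_append (ms ms' : List (V × ℕ)) (t : V) :
    moveCount (ms ++ ms') t = moveCount ms t + moveCount ms' t := by
  simp [moveCount]

theorem moveCount_filter_le (p : V × ℕ → Bool) (ms : List (V × ℕ)) (t : V) :
    moveCount (ms.filter p) t ≤ moveCount ms t :=
  (List.filter_sublist.map Prod.fst).count_le t

theorem length_le_card_mul_of_moveCount_le {ms : List (V × ℕ)} {k : ℕ}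
    (hk : ∀ t, moveCount ms t ≤ k) : ms.length ≤ (ms.map Prod.fst).toFinset.card * k := by
  calc ms.length = ∑ t ∈ (ms.map Prod.fst).toFinset, moveCount ms t := by
        simp only [moveCount, List.sum_toFinset_count_eq_length, List.length_map]
    _ ≤ _ := Finset.sum_le_card_nsmul _ _ _ fun t _ => hk t

theorem IsRecoloring.append {ms ms' : List (V × ℕ)} (h : IsRecoloring G L φ ms ψ)
    (h' : IsRecoloring G L ψ ms' χ) : IsRecoloring G L φ (ms ++ ms') χ := by
  induction h with
  | nil => exact h'
  | cons hc hne hfree _ ih => exact .cons hc hne hfree (ih h')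

theorem IsRecoloring.eq_of_moveCount_eq_zero {ms : List (V × ℕ)} {t : V}
    (h : IsRecoloring G L φ ms ψ) (ht : moveCount ms t = 0) : ψ t = φ t := by
  induction h with
  | nil => rfl
  | @cons φ ψ u c ms _ _ _ _ ih =>
    rw [moveCount_cons] at ht
    have htu : t ≠ u := by rintro rfl; simp at ht
    rw [ih (by omega), Function.update_of_ne htu]

theorem IsRecoloring.exists_isRecolSeq {ms : List (V × ℕ)} (h : IsRecoloring G L φ ms ψ)
    (hφ : IsLColoring G L φ) :
    ∃ (m : ℕ) (σ : Fin (m + 1) → V → ℕ), IsRecolSeq G L σ φ ψ ∧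
      ∀ t, recolorCount σ t = moveCount ms t := by
  induction h with
  | nil φ =>
    exact ⟨0, fun _ => φ, ⟨rfl, rfl, fun _ => hφ, fun i => i.elim0⟩,
      fun t => by simp [recolorCount, moveCount]⟩
  | @cons φ ψ u c ms hc hne hfree _ ih =>
    obtain ⟨m, σ, ⟨hfirst, hlast, hcol, hstep⟩, hcount⟩ := ih (hφ.update hc hfree)
    have hchange : ∀ t, φ t ≠ σ 0 t ↔ u = t := by
      intro t
      obtain rfl | ht := eq_or_ne t u
      · simp [hfirst, hne]
      · simp [hfirst, ht, ht.symm]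
    refine ⟨m + 1, Fin.cons φ σ, ⟨rfl, ?_, fun i => ?_, fun i => ?_⟩, fun t => ?_⟩
    · rw [← Fin.succ_last, Fin.cons_succ, hlast]
    · cases i using Fin.cases with
      | zero => exact hφ
      | succ i => exact hcol i
    · cases i using Fin.cases with
      | zero => exact ⟨u, (hchange u).2 rfl, fun t ht => ((hchange t).1 ht).symm⟩
      | succ i => simpa [← Fin.succ_castSucc] using hstep i
    · rw [recolorCount_succ, moveCount_cons, ← hcount]
      simp only [Fin.cons_succ, Fin.cons_zero, Fin.cons_one, hchange]

theorem exists_isRecoloring_of_isRecolSeq {m : ℕ} {σ : Fin (m + 1) → V → ℕ}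
    (h : IsRecolSeq G L σ φ ψ) :
    ∃ ms, IsRecoloring G L φ ms ψ ∧ ∀ t, moveCount ms t = recolorCount σ t := by
  obtain ⟨rfl, rfl, hcol, hstep⟩ := h
  induction m with
  | zero => exact ⟨[], .nil _, fun t => by simp [recolorCount, moveCount]⟩
  | succ m ih =>
    obtain ⟨u, hu, huniq⟩ := hstep 0
    simp only [Fin.castSucc_zero, Fin.succ_zero_eq_one] at hu huniq
    have hchange : ∀ t, σ 0 t ≠ σ 1 t ↔ u = t :=
      fun t => ⟨fun ht => (huniq t ht).symm, by rintro rfl; exact hu⟩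
    have hupdate : σ 1 = Function.update (σ 0) u (σ 1 u) := by
      refine Function.eq_update_iff.2 ⟨rfl, fun t ht => ?_⟩
      exact (not_ne_iff.1 (mt (hchange t).1 ht.symm)).symm
    obtain ⟨ms, hms, hcount⟩ := ih (fun i => hcol i.succ) (fun i => by simpa using hstep i.succ)
    refine ⟨(u, σ 1 u) :: ms, .cons ((hcol 1).1 u) hu (fun t ht => ?_) (hupdate ▸ hms),
      fun t => ?_⟩
    · rw [not_ne_iff.1 (mt (hchange t).1 ht.ne)]
      exact (hcol 1).2 ht.symm
    · rw [moveCount_cons, hcount, recolorCount_succ]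
      simp only [hchange]

theorem recolorableWithin_iff_exists_isRecolSeq (hφ : IsLColoring G L φ) {n : V → ℕ} :
    RecolorableWithin G L n φ ψ ↔
      ∃ (m : ℕ) (σ : Fin (m + 1) → V → ℕ), IsRecolSeq G L σ φ ψ ∧
        ∀ t, recolorCount σ t ≤ n t := by
  constructor
  · rintro ⟨ms, hms, hn⟩
    obtain ⟨m, σ, hσ, hcount⟩ := hms.exists_isRecolSeq hφ
    exact ⟨m, σ, hσ, fun t => (hcount t).trans_le (hn t)⟩
  · rintro ⟨m, σ, hσ, hn⟩
    obtain ⟨ms, hms, hcount⟩ := exists_isRecoloring_of_isRecolSeq hσ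
    exact ⟨ms, hms, fun t => (hcount t).trans_le (hn t)⟩

namespace RecolorableWithin

theorem refl (G : SimpleGraph V) (L : V → Finset ℕ) (φ : V → ℕ) :
    RecolorableWithin G L 0 φ φ :=
  ⟨[], .nil φ, fun _ => le_rfl⟩

theorem trans {n n' : V → ℕ} (h : RecolorableWithin G L n φ ψ)
    (h' : RecolorableWithin G L n' ψ χ) : RecolorableWithin G L (n + n') φ χ := by
  obtain ⟨ms, hms, hn⟩ := h
  obtain ⟨ms', hms', hn'⟩ := h'
  refine ⟨ms ++ ms', hms.append hms', fun t => ?_⟩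
  rw [moveCount_append]
  exact add_le_add (hn t) (hn' t)

theorem mono {n n' : V → ℕ} (h : RecolorableWithin G L n φ ψ) (hn : n ≤ n') :
    RecolorableWithin G L n' φ ψ := by
  obtain ⟨ms, hms, hcount⟩ := h
  exact ⟨ms, hms, fun t => (hcount t).trans (hn t)⟩

theorem eq_of_eq_zero {n : V → ℕ} {t : V} (h : RecolorableWithin G L n φ ψ) (ht : n t = 0) :
    ψ t = φ t := by
  obtain ⟨ms, hms, hn⟩ := h
  exact hms.eq_of_moveCount_eq_zero (Nat.eq_zero_of_le_zero (ht ▸ hn t))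

theorem update {u : V} {c : ℕ} (hc : c ∈ L u) (hfree : ∀ t, G.Adj u t → φ t ≠ c) :
    RecolorableWithin G L (Pi.single u 1) φ (Function.update φ u c) := by
  obtain rfl | hne := eq_or_ne (φ u) c
  · rw [Function.update_eq_self]
    exact (refl G L φ).mono fun _ => zero_le
  · exact ⟨[(u, c)], .cons hc hne hfree (.nil _), fun t => by
      simp [moveCount, Pi.single_apply, List.count_singleton', eq_comm]⟩

end RecolorableWithin

end Moves

section Choice

theorem exists_mem_notMem_forall_ne {α ι : Type*} {A : Finset α} {N : Finset ι} {f : ι → α}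
    {F : List α} (h : N.card + F.length < A.card) : ∃ c ∈ A, c ∉ F ∧ ∀ t ∈ N, f t ≠ c := by
  classical
  have hcard : (N.image f ∪ F.toFinset).card < A.card :=
    ((Finset.card_union_le _ _).trans
      (add_le_add Finset.card_image_le F.toFinset_card_le)).trans_lt h
  obtain ⟨c, hcA, hc⟩ := Finset.exists_mem_notMem_of_card_lt_card hcard
  simp only [Finset.mem_union, Finset.mem_image, List.mem_toFinset, not_or, not_exists,
    not_and] at hc
  exact ⟨c, hcA, hc.2, hc.1⟩

variable {V : Type} [DecidableEq V] {G : SimpleGraph V} [G.LocallyFinite] {L : V → Finset ℕ}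

theorem exists_recolorableWithin_update (φ : V → ℕ) {u : V} {F : List ℕ}
    (h : G.degree u + F.length + 1 < (L u).card) :
    ∃ c, c ≠ φ u ∧ c ∉ F ∧ RecolorableWithin G L (Pi.single u 1) φ (Function.update φ u c) := by
  obtain ⟨c, hc, hcF, hfree⟩ := exists_mem_notMem_forall_ne (A := L u)
    (N := G.neighborFinset u) (f := φ) (F := φ u :: F) (by simpa [← add_assoc] using h)
  rw [List.mem_cons, not_or] at hcF
  exact ⟨c, hcF.1, hcF.2, .update hc fun t ht => hfree t ((G.mem_neighborFinset u t).2 ht)⟩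

/- Ignoring `q` frees one more color for `u`; if `u` picks the color of `q`, then `q` is recolored
first. -/
theorem exists_recolorableWithin_of_adj (φ : V → ℕ) {u q : V} {F Fq : List ℕ} (huq : G.Adj u q)
    (hu : G.degree u + F.length < (L u).card) (hq : G.degree q + Fq.length + 1 < (L q).card) :
    ∃ ψ, RecolorableWithin G L (Pi.single u 1 + Pi.single q 1) φ ψ ∧
      (∀ t, t ≠ u → t ≠ q → ψ t = φ t) ∧ ψ u ≠ φ u ∧ ψ u ∉ F ∧ (ψ q = φ q ∨ ψ q ∉ Fq) := by
  have hcard : ((G.neighborFinset u).erase q).card + (φ u :: F).length < (L u).card := by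
    have hmem : q ∈ G.neighborFinset u := (G.mem_neighborFinset u q).2 huq
    have hpos : 0 < G.degree u := (G.degree_pos_iff_exists_adj u).2 ⟨q, huq⟩
    rw [Finset.card_erase_of_mem hmem, G.card_neighborFinset_eq_degree, List.length_cons]
    omega
  obtain ⟨c, hc, hcF, hfree⟩ := exists_mem_notMem_forall_ne (f := φ) hcard
  rw [List.mem_cons, not_or] at hcF
  have hfree : ∀ t, G.Adj u t → t ≠ q → φ t ≠ c := fun t ht htq =>
    hfree t (Finset.mem_erase.2 ⟨htq, (G.mem_neighborFinset u t).2 ht⟩)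
  by_cases hqc : φ q = c
  · obtain ⟨d, hdq, hdF, hstep⟩ := exists_recolorableWithin_update φ hq
    have hstep' : RecolorableWithin G L (Pi.single u 1) (Function.update φ q d)
        (Function.update (Function.update φ q d) u c) := by
      refine .update hc fun t ht => ?_
      obtain rfl | htq := eq_or_ne t q
      · simpa [← hqc] using hdq
      · simpa [htq] using hfree t ht htq
    refine ⟨_, (hstep.trans hstep').mono (add_comm _ _).le, fun t htu htq => ?_, ?_, ?_, ?_⟩
    · simp [htu, htq]
    · simpa using hcF.1
    · simpa using hcF.2
    · exact .inr (by simpa [huq.ne'] using hdF)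
  · refine ⟨Function.update φ u c, RecolorableWithin.mono (.update hc fun t ht => ?_) le_self_add,
      fun t htu _ => ?_, ?_, ?_, ?_⟩
    · obtain rfl | htq := eq_or_ne t q
      exacts [hqc, hfree t ht htq]
    · simp [htu]
    · simpa using hcF.1
    · simpa using hcF.2
    · exact .inl (by simp [huq.ne'])

end Choice

/-- A vertex of color `c` can afford to give up, one after another, the colors in `E` when they are
demanded of it: `a` plain and `b` aided recolorings and `h` assists to other vertices are left to
it. A plain recoloring covers `m` demands, an aided one `m + 1`, and an assist loses at most the
one demand by which an aided recoloring is ahead of a plain one.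
Here `c` is known to avoid the first `j` demands, and `e = 1` if it comes from an aided
recoloring. -/
def Solvent (m a b h : ℕ) (E : List ℕ) (c : ℕ) : Prop :=
  ∃ j e, e ≤ 1 ∧ j + 1 ≤ m + e ∧ c ∉ E.take j ∧
    E.length + min h (b + e) ≤ j + m * a + (m + 1) * b

namespace Solvent

variable {m a b h c c' d : ℕ} {E : List ℕ}

theorem of_length_add_le (hm : 0 < m) (hE : E.length + min h b ≤ m * a + (m + 1) * b) :
    Solvent m a b h E c :=
  ⟨0, 0, by lia, by lia, by simp, by simpa using hE⟩

theorem tail (hs : Solvent m a b h (d :: E) c) : Solvent m a b h E c := by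
  obtain ⟨j, e, he, hj, hc, hlen⟩ := hs
  rw [List.length_cons] at hlen
  cases j with
  | zero => exact ⟨0, e, he, hj, by simp, by lia⟩
  | succ j => exact ⟨j, e, he, by lia, fun h' => hc (List.mem_cons_of_mem _ h'), by lia⟩

theorem length_add_le (hs : Solvent m a b h (c :: E) c) :
    E.length + 1 + min h b ≤ m * a + (m + 1) * b := by
  obtain ⟨j, e, -, -, hc, hlen⟩ := hs
  cases j with
  | zero => rw [List.length_cons] at hlen; lia
  | succ j => simp at hc

theorem plain (hm : 0 < m) (hs : Solvent m (a + 1) 0 h (c :: E) c) (hc' : c' ∉ E.take (m - 1)) :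
    Solvent m a 0 h E c' := by
  have := hs.length_add_le
  exact ⟨m - 1, 0, by lia, by lia, hc', by rw [mul_add_one] at this; lia⟩

theorem aided (hs : Solvent m a (b + 1) h (c :: E) c) (hc' : c' ∉ E.take m) :
    Solvent m a b h E c' := by
  have := hs.length_add_le
  exact ⟨m, 1, by lia, by lia, hc', by rw [mul_add_one] at this; lia⟩

theorem assist (hm : 0 < m) (hs : Solvent m a b (h + 1) E c) (hc' : c' ∉ E.take (m - 1)) :
    Solvent m a b h E c' := by
  obtain ⟨j, e, he, hj, -, hlen⟩ := hs
  exact ⟨m - 1, 0, by lia, by lia, hc', by lia⟩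

theorem skip_assist (hs : Solvent m a b (h + 1) E c) : Solvent m a b h E c := by
  obtain ⟨j, e, he, hj, hc, hlen⟩ := hs
  exact ⟨j, e, he, hj, hc, by lia⟩

end Solvent

/-- The recolorings that a phase of the process may still use: `plain u` recolorings of `u` alone,
and `aid u q` recolorings of `u` during which `q` may be recolored too. -/
structure Budget (V : Type) where
  /-- The number of plain recolorings of a vertex. -/
  plain : V → ℕ
  /-- The number of recolorings of the first vertex that the second one aids. -/
  aid : V → V → ℕ

namespace Budget

variable {V : Type} [DecidableEq V]

/-- The number of recolorings of `u` that some vertex of `S` aids. -/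
def aided (B : Budget V) (S : Finset V) (u : V) : ℕ := ∑ q ∈ S, B.aid u q

/-- The number of recolorings of vertices of `S` that `u` aids. -/
def assists (B : Budget V) (S : Finset V) (u : V) : ℕ := ∑ q ∈ S, B.aid q u

/-- A bound for the number of times `u` is recolored while the budget is spent. -/
def total (B : Budget V) (S : Finset V) (u : V) : ℕ := B.plain u + B.aided S u + B.assists S u

/-- The budget with one more plain recoloring of `u`. -/
def addPlain (B : Budget V) (u : V) : Budget V := ⟨B.plain + Pi.single u 1, B.aid⟩

/-- The budget with one more recoloring of `u` aided by `q`. -/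
def addAid (B : Budget V) (u q : V) : Budget V := ⟨B.plain, B.aid + Pi.single u (Pi.single q 1)⟩

theorem exists_eq_addPlain {B : Budget V} {u : V} (h : B.plain u ≠ 0) :
    ∃ B' : Budget V, B = B'.addPlain u := by
  obtain ⟨plain, aid⟩ := B
  refine ⟨⟨plain - Pi.single u 1, aid⟩, ?_⟩
  simp only [addPlain, mk.injEq, and_true]
  funext s
  obtain rfl | hs := eq_or_ne s u
  · simpa using (Nat.sub_add_cancel (Nat.one_le_iff_ne_zero.2 h)).symm
  · simp [hs]

theorem exists_eq_addAid {B : Budget V} {u q : V} (h : B.aid u q ≠ 0) :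
    ∃ B' : Budget V, B = B'.addAid u q := by
  obtain ⟨plain, aid⟩ := B
  refine ⟨⟨plain, aid - Pi.single u (Pi.single q 1)⟩, ?_⟩
  simp only [addAid, mk.injEq, true_and]
  funext s t
  obtain rfl | hs := eq_or_ne s u
  · obtain rfl | ht := eq_or_ne t q
    · simpa using (Nat.sub_add_cancel (Nat.one_le_iff_ne_zero.2 h)).symm
    · simp [ht]
  · simp [hs]

variable {S : Finset V} (B : Budget V) {u q : V}

theorem aided_addPlain (s : V) : (B.addPlain u).aided S s = B.aided S s := rfl

theorem assists_addPlain (s : V) : (B.addPlain u).assists S s = B.assists S s := rfl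

theorem plain_addPlain (s : V) :
    (B.addPlain u).plain s = B.plain s + (Pi.single u 1 : V → ℕ) s := rfl

theorem aided_addAid (hq : q ∈ S) (s : V) :
    (B.addAid u q).aided S s = B.aided S s + (Pi.single u 1 : V → ℕ) s := by
  obtain rfl | hs := eq_or_ne s u
  · simp [aided, addAid, Finset.sum_add_distrib, hq]
  · simp [aided, addAid, hs]

theorem assists_addAid (hu : u ∈ S) (s : V) :
    (B.addAid u q).assists S s = B.assists S s + (Pi.single q 1 : V → ℕ) s := by
  have hsingle : ∀ t, (Pi.single u (Pi.single q 1) : V → V → ℕ) t s =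
      (Pi.single u ((Pi.single q 1 : V → ℕ) s) : V → ℕ) t :=
    fun t => Pi.apply_single (fun _ (f : V → ℕ) => f s) (fun _ => rfl) u _ t
  simp [assists, addAid, Finset.sum_add_distrib, hsingle, hu]

theorem total_addPlain (s : V) :
    (B.addPlain u).total S s = B.total S s + (Pi.single u 1 : V → ℕ) s := by
  rw [total, aided_addPlain, assists_addPlain, plain_addPlain, total]
  ring

theorem total_addAid (hu : u ∈ S) (hq : q ∈ S) (s : V) :
    (B.addAid u q).total S s = B.total S s + (Pi.single u 1 + Pi.single q 1 : V → ℕ) s := by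
  rw [total, B.aided_addAid hq, B.assists_addAid hu]
  simp only [total, addAid, Pi.add_apply]
  ring

end Budget

/-- With the budget `B`, and looking ahead at `m u` demands at a time, `u` can meet the demands
`E`. -/
def Budget.Covers {V : Type} (B : Budget V) (S : Finset V) (m : V → ℕ) (φ : V → ℕ) (u : V)
    (E : List ℕ) : Prop :=
  Solvent (m u) (B.plain u) (B.aided S u) (B.assists S u) E (φ u)

/-- `φ'` can be reached from `φ` by recoloring only vertices of `S`, at the expense of the
difference between the budgets `B` and `B'`. -/
def Spends {V : Type} [DecidableEq V] (G : SimpleGraph V) (L : V → Finset ℕ) (S : Finset V)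
    (φ : V → ℕ) (B : Budget V) (φ' : V → ℕ) (B' : Budget V) : Prop :=
  ∃ n, RecolorableWithin G L n φ φ' ∧ (∀ s ∈ S, n s + B'.total S s ≤ B.total S s) ∧
    (∀ t ∉ S, n t = 0) ∧ B'.aid ≤ B.aid

section Clearing

variable {V : Type} [DecidableEq V] {G : SimpleGraph V} {L : V → Finset ℕ} {S : Finset V}
  {m : V → ℕ} {φ φ' φ'' : V → ℕ} {B B' B'' : Budget V} {u q : V} {c : ℕ} {E : V → List ℕ}

theorem Spends.refl (G : SimpleGraph V) (L : V → Finset ℕ) (S : Finset V) (φ : V → ℕ)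
    (B : Budget V) : Spends G L S φ B φ B :=
  ⟨0, .refl G L φ, by simp, by simp, le_rfl⟩

theorem Spends.trans (h : Spends G L S φ B φ' B') (h' : Spends G L S φ' B' φ'' B'') :
    Spends G L S φ B φ'' B'' := by
  obtain ⟨n, hrec, hn, hzero, haid⟩ := h
  obtain ⟨n', hrec', hn', hzero', haid'⟩ := h'
  refine ⟨n + n', hrec.trans hrec', fun s hs => ?_, fun t ht => ?_, haid'.trans haid⟩
  · have := hn s hs
    have := hn' s hs
    simp only [Pi.add_apply]
    lia
  · simp [hzero t ht, hzero' t ht]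

theorem Spends.addPlain (hu : u ∈ S) (h : RecolorableWithin G L (Pi.single u 1) φ φ') :
    Spends G L S φ (B.addPlain u) φ' B := by
  refine ⟨_, h, fun s _ => ?_, fun t ht => ?_, le_rfl⟩
  · rw [B.total_addPlain, add_comm]
  · rw [Pi.single_eq_of_ne (ne_of_mem_of_not_mem hu ht).symm]

theorem Spends.addAid (hu : u ∈ S) (hq : q ∈ S)
    (h : RecolorableWithin G L (Pi.single u 1 + Pi.single q 1) φ φ') :
    Spends G L S φ (B.addAid u q) φ' B := by
  refine ⟨_, h, fun s _ => ?_, fun t ht => ?_, le_self_add⟩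
  · rw [B.total_addAid hu hq, add_comm]
  · simp [(ne_of_mem_of_not_mem hu ht).symm, (ne_of_mem_of_not_mem hq ht).symm]

variable [G.LocallyFinite]

theorem exists_spends_plain (hm : ∀ s ∈ S, 0 < m s ∧ G.degree s + m s < (L s).card) (hu : u ∈ S)
    (haid : B.aided S u = 0) (hcov : B.Covers S m φ u (φ u :: E u))
    (hcovS : ∀ s ∈ S, s ≠ u → B.Covers S m φ s (E s)) :
    ∃ φ' B', Spends G L S φ B φ' B' ∧ φ' u ≠ φ u ∧ (∀ s ∈ S, B'.Covers S m φ' s (E s)) ∧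
      ∀ s, s ≠ u → φ' s = φ s := by
  obtain ⟨hpos, hdeg⟩ := hm u hu
  have hplain : B.plain u ≠ 0 := by
    intro h0
    have := hcov.length_add_le
    simp [haid, h0] at this
  obtain ⟨B, rfl⟩ := Budget.exists_eq_addPlain hplain
  obtain ⟨c, hc, hcE, hrec⟩ := exists_recolorableWithin_update (G := G) (L := L) φ
    (F := (E u).take (m u - 1)) (u := u) (by rw [List.length_take]; lia)
  rw [B.aided_addPlain] at haid
  simp only [Budget.Covers, B.plain_addPlain, B.aided_addPlain, B.assists_addPlain] at hcov hcovS ⊢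
  refine ⟨_, B, .addPlain hu hrec, by simpa using hc, fun s hs => ?_, fun s hsu => by simp [hsu]⟩
  obtain rfl | hsu := eq_or_ne s u
  · rw [haid, Pi.single_eq_same] at hcov
    rw [haid, Function.update_self]
    exact hcov.plain hpos hcE
  · simpa [hsu] using hcovS s hs hsu

theorem exists_spends_aided (hm : ∀ s ∈ S, 0 < m s ∧ G.degree s + m s < (L s).card) (hu : u ∈ S)
    (hq : q ∈ S) (huq : G.Adj u q) (haid : B.aid u q ≠ 0)
    (hcov : B.Covers S m φ u (φ u :: E u)) (hcovS : ∀ s ∈ S, s ≠ u → B.Covers S m φ s (E s)) :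
    ∃ φ' B', Spends G L S φ B φ' B' ∧ φ' u ≠ φ u ∧ (∀ s ∈ S, B'.Covers S m φ' s (E s)) ∧
      ∀ s, s ≠ u → s ≠ q → φ' s = φ s := by
  obtain ⟨hpos, hdeg⟩ := hm u hu
  obtain ⟨hposq, hdegq⟩ := hm q hq
  obtain ⟨B, rfl⟩ := Budget.exists_eq_addAid haid
  obtain ⟨φ', hrec, hsame, hne, hφu, hφq⟩ := exists_recolorableWithin_of_adj (L := L) φ
    (F := (E u).take (m u)) (Fq := (E q).take (m q - 1)) huq (by rw [List.length_take]; lia)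
    (by rw [List.length_take]; lia)
  simp only [Budget.Covers, B.aided_addAid hq, B.assists_addAid hu] at hcov hcovS ⊢
  refine ⟨φ', B, .addAid hu hq hrec, hne, fun s hs => ?_, hsame⟩
  obtain rfl | hsu := eq_or_ne s u
  · rw [Pi.single_eq_same, Pi.single_eq_of_ne huq.ne, add_zero] at hcov
    exact hcov.aided hφu
  · have hcov := hcovS s hs hsu
    rw [Pi.single_eq_of_ne hsu, add_zero] at hcov
    obtain rfl | hsq := eq_or_ne s q
    · rw [Pi.single_eq_same] at hcov
      obtain hφq | hφq := hφq
      · exact hφq ▸ hcov.skip_assist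
      · exact hcov.assist hposq hφq
    · rw [Pi.single_eq_of_ne hsq, add_zero] at hcov
      exact (hsame s hsu hsq).symm ▸ hcov

theorem exists_spends_ne (hm : ∀ s ∈ S, 0 < m s ∧ G.degree s + m s < (L s).card) (hu : u ∈ S)
    (hadj : ∀ q ∈ S, B.aid u q ≠ 0 → G.Adj u q) (hcov : B.Covers S m φ u (c :: E u))
    (hcovS : ∀ s ∈ S, s ≠ u → B.Covers S m φ s (E s)) :
    ∃ φ' B', Spends G L S φ B φ' B' ∧ φ' u ≠ c ∧ (∀ s ∈ S, B'.Covers S m φ' s (E s)) ∧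
      ∀ s, s ≠ u → B.aid u s = 0 → φ' s = φ s := by
  by_cases hne : φ u ≠ c
  · refine ⟨φ, B, .refl G L S φ B, hne, fun s hs => ?_, fun _ _ _ => rfl⟩
    obtain rfl | hsu := eq_or_ne s u
    exacts [hcov.tail, hcovS s hs hsu]
  obtain rfl := not_ne_iff.1 hne
  by_cases haid : B.aided S u = 0
  · obtain ⟨φ', B', hsp, hφu, hcov', hsame⟩ := exists_spends_plain hm hu haid hcov hcovS
    exact ⟨φ', B', hsp, hφu, hcov', fun s hsu _ => hsame s hsu⟩
  · obtain ⟨q, hq, hquq⟩ := Finset.exists_ne_zero_of_sum_ne_zero haid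
    obtain ⟨φ', B', hsp, hφu, hcov', hsame⟩ :=
      exists_spends_aided hm hu hq (hadj q hq hquq) hquq hcov hcovS
    refine ⟨φ', B', hsp, hφu, hcov', fun s hsu hs => hsame s hsu ?_⟩
    rintro rfl
    exact hquq hs

theorem exists_spends_forall_ne (hm : ∀ s ∈ S, 0 < m s ∧ G.degree s + m s < (L s).card)
    (hadj : ∀ u ∈ S, ∀ q ∈ S, B.aid u q ≠ 0 → G.Adj u q) {T : List V} (hTS : ∀ t ∈ T, t ∈ S)
    (hT : T.Nodup) (hpw : T.Pairwise fun a b => B.aid b a = 0)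
    (hcov : ∀ s ∈ S, B.Covers S m φ s (if s ∈ T then c :: E s else E s)) :
    ∃ φ' B', Spends G L S φ B φ' B' ∧ (∀ t ∈ T, φ' t ≠ c) ∧
      (∀ s ∈ S, B'.Covers S m φ' s (E s)) ∧
      ∀ s ∉ T, (∀ u ∈ T, B.aid u s = 0) → φ' s = φ s := by
  induction T generalizing φ B with
  | nil => exact ⟨φ, B, .refl G L S φ B, by simp, by simpa using hcov, fun _ _ _ => rfl⟩
  | cons u T ih =>
    obtain ⟨huT, hT⟩ := List.nodup_cons.1 hT
    obtain ⟨hpwu, hpw⟩ := List.pairwise_cons.1 hpw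
    obtain ⟨hu, hTS⟩ := List.forall_mem_cons.1 hTS
    obtain ⟨φ₁, B₁, hsp₁, hφ₁u, hcov₁, hsame₁⟩ := exists_spends_ne (c := c)
      (E := fun s => if s ∈ T then c :: E s else E s) hm hu (hadj u hu)
      (by simpa [huT] using hcov u hu) (fun s hs hsu => by simpa [hsu] using hcov s hs)
    have haid₁ : ∀ a b, B.aid a b = 0 → B₁.aid a b = 0 := by
      obtain ⟨_, -, -, -, hle⟩ := hsp₁
      exact fun a b h => Nat.eq_zero_of_le_zero (h ▸ hle a b)
    obtain ⟨φ₂, B₂, hsp₂, hφ₂T, hcov₂, hsame₂⟩ := ih (B := B₁)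
      (fun a ha b hb h => hadj a ha b hb (mt (haid₁ a b) h)) hTS hT
      (hpw.imp fun h => haid₁ _ _ h) hcov₁
    refine ⟨φ₂, B₂, hsp₁.trans hsp₂, List.forall_mem_cons.2 ⟨?_, hφ₂T⟩, hcov₂, ?_⟩
    · rwa [hsame₂ u huT fun t ht => haid₁ t u (hpwu t ht)]
    · intro s hs haid
      rw [List.mem_cons, not_or] at hs
      rw [List.forall_mem_cons] at haid
      rw [hsame₂ s hs.2 fun t ht => haid₁ t s (haid.2 t ht), hsame₁ s hs.1 haid.1]

end Clearing

open scoped Classical in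
/-- The colors that the moves `ms` assign to neighbors of `s`, in order. Before each of these moves
`s` must give up the color in question. -/
noncomputable def demands {V : Type} (G : SimpleGraph V) {U : Set V} (ms : List (U × ℕ)) (s : V) :
    List ℕ :=
  (ms.filter fun p => G.Adj s p.1).map Prod.snd

section Simulation

variable {V : Type} {G : SimpleGraph V} {L : V → Finset ℕ}

open scoped Classical in
theorem demands_cons {U : Set V} (p : U) (c : ℕ) (ms : List (U × ℕ)) (s : V) :
    demands G ((p, c) :: ms) s = if G.Adj s p then c :: demands G ms s else demands G ms s := by
  by_cases h : G.Adj s p <;> simp [demands, h]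

variable [DecidableEq V]

theorem length_demands [G.LocallyFinite] {S : Finset V} (ms : List (↥((S : Set V)ᶜ) × ℕ)) (s : V)
    {k : ℕ} (hk : ∀ u, moveCount ms u ≤ k) :
    (demands G ms s).length ≤ (G.neighborFinset s \ S).card * k := by
  classical
  set ns := ms.filter fun p => G.Adj s p.1
  have hsub : (ns.map Prod.fst).toFinset.map (Function.Embedding.subtype _) ⊆
      G.neighborFinset s \ S := by
    intro t ht
    simp only [ns, Finset.mem_map, List.mem_toFinset, List.mem_map, List.mem_filter,
      decide_eq_true_eq] at ht
    obtain ⟨u, ⟨p, ⟨-, hadj⟩, rfl⟩, rfl⟩ := ht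
    simpa using ⟨hadj, p.1.2⟩
  calc (demands G ms s).length = ns.length := List.length_map ..
    _ ≤ (ns.map Prod.fst).toFinset.card * k :=
        length_le_card_mul_of_moveCount_le fun u => (moveCount_filter_le _ ms u).trans (hk u)
    _ ≤ (G.neighborFinset s \ S).card * k := by
        rw [← Finset.card_map]
        gcongr

theorem Spends.eq_of_notMem {S : Finset V} {φ φ' : V → ℕ} {B B' : Budget V}
    (h : Spends G L S φ B φ' B') {t : V} (ht : t ∉ S) : φ' t = φ t := by
  obtain ⟨n, hrec, -, hzero, -⟩ := h
  exact hrec.eq_of_eq_zero (hzero t ht)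

theorem exists_recolorableWithin_of_isRecoloring_induce [G.LocallyFinite] {S : Finset V}
    {m φ : V → ℕ} {B : Budget V} {T : List V} {χ χ' : ↥((S : Set V)ᶜ) → ℕ}
    {ms : List (↥((S : Set V)ᶜ) × ℕ)}
    (hm : ∀ s ∈ S, 0 < m s ∧ G.degree s + m s < (L s).card)
    (hadj : ∀ u ∈ S, ∀ q ∈ S, B.aid u q ≠ 0 → G.Adj u q) (hTS : ∀ t, t ∈ T ↔ t ∈ S)
    (hT : T.Nodup) (hpw : T.Pairwise fun a b => B.aid b a = 0)
    (hms : IsRecoloring (G.induce (S : Set V)ᶜ) (fun u => L u) χ ms χ') (hχ : ∀ u, χ u = φ u)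
    (hcov : ∀ s ∈ S, B.Covers S m φ s (demands G ms s)) :
    ∃ n ψ, RecolorableWithin G L n φ ψ ∧ (∀ u, χ' u = ψ u) ∧ (∀ s ∈ S, n s ≤ B.total S s) ∧
      ∀ u : ↥((S : Set V)ᶜ), n u ≤ moveCount ms u := by
  classical
  induction hms generalizing φ B with
  | nil χ => exact ⟨0, φ, .refl G L φ, hχ, by simp, by simp⟩
  | @cons χ χ' p c ms hc _ hfree _ ih =>
    simp only [demands_cons] at hcov
    obtain ⟨φ₁, B₁, hsp, hφ₁, hcov₁, -⟩ := exists_spends_forall_ne (c := c) hm hadj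
      (T := T.filter fun t => G.Adj t p) (E := demands G ms) (by simp_all) (hT.filter _)
      (hpw.filter _) (fun s hs => by simpa [hTS, hs] using hcov s hs)
    have hnotMem : ∀ u : ↥((S : Set V)ᶜ), (u : V) ∉ S := fun u => u.2
    have hout : ∀ u : ↥((S : Set V)ᶜ), χ u = φ₁ u := fun u =>
      (hχ u).trans (hsp.eq_of_notMem (hnotMem u)).symm
    have hmove : RecolorableWithin G L (Pi.single (p : V) 1) φ₁ (Function.update φ₁ p c) := by
      refine .update hc fun t hpt => ?_
      by_cases ht : t ∈ S
      · exact hφ₁ t (by simp [hTS, ht, hpt.symm])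
      · exact hout ⟨t, by simpa using ht⟩ ▸ hfree ⟨t, by simpa using ht⟩ hpt
    have hne : ∀ s ∈ S, s ≠ p := fun s hs hsp => p.2 (hsp ▸ hs)
    obtain ⟨n₁, hrec₁, hn₁, hzero₁, haid⟩ := hsp
    obtain ⟨n, ψ, hrec, hψ, hn, hn'⟩ := ih (φ := Function.update φ₁ p c) (B := B₁)
      (fun a ha b hb h => hadj a ha b hb fun h0 => h (Nat.eq_zero_of_le_zero (h0 ▸ haid a b)))
      (hpw.imp fun h0 => Nat.eq_zero_of_le_zero (h0 ▸ haid _ _))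
      (fun u => by simp [Function.update_apply, hout, Subtype.ext_iff])
      (fun s hs => by simpa [Budget.Covers, hne s hs] using hcov₁ s hs)
    refine ⟨n₁ + Pi.single (p : V) 1 + n, ψ, (hrec₁.trans hmove).trans hrec, hψ, fun s hs => ?_,
      fun u => ?_⟩
    · have := hn₁ s hs
      have := hn s hs
      simp only [Pi.add_apply, Pi.single_eq_of_ne (hne s hs)]
      lia
    · have hsingle : (Pi.single (p : V) 1 : V → ℕ) u = if p = u then 1 else 0 := by
        simp [Pi.single_apply, Subtype.ext_iff, eq_comm]
      simp only [moveCount_cons, Pi.add_apply, hzero₁ u (hnotMem u), hsingle]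
      linarith [hn' u]

end Simulation

section Finish

variable {V : Type} [DecidableEq V] {G : SimpleGraph V} {L : V → Finset ℕ}

theorem single_add_count (u : V) (T : List V) : Pi.single u 1 + T.count = (u :: T).count := by
  funext t
  obtain rfl | htu := eq_or_ne t u
  · simp [add_comm]
  · simp [htu, htu.symm]

theorem exists_recolorableWithin_forall_notMem [G.LocallyFinite] {F : V → List ℕ} {T : List V}
    (φ : V → ℕ) (hF : ∀ t ∈ T, G.degree t + (F t).length < (L t).card) :
    ∃ ψ, RecolorableWithin G L T.count φ ψ ∧ ∀ t ∈ T, ψ t ∉ F t := by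
  induction T generalizing φ with
  | nil => exact ⟨φ, .refl G L φ, by simp⟩
  | cons u T ih =>
    obtain ⟨hFu, hFT⟩ := List.forall_mem_cons.1 hF
    obtain ⟨c, hc, hcF, hfree⟩ := exists_mem_notMem_forall_ne (N := G.neighborFinset u) (f := φ) hFu
    obtain ⟨ψ, hrec, hψ⟩ := ih (Function.update φ u c) hFT
    have hstep : RecolorableWithin G L (Pi.single u 1) φ (Function.update φ u c) :=
      .update hc fun t ht => hfree t ((G.mem_neighborFinset u t).2 ht)
    refine ⟨ψ, single_add_count u T ▸ hstep.trans hrec, List.forall_mem_cons.2 ⟨?_, hψ⟩⟩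
    by_cases hu : u ∈ T
    · exact hψ u hu
    · rwa [hrec.eq_of_eq_zero (List.count_eq_zero.2 hu), Function.update_self]

theorem RecolorableWithin.of_pairwise {φ β : V → ℕ} {T : List V} (hβ : IsLColoring G L β)
    (hT : T.Nodup) (heq : ∀ t ∉ T, φ t = β t)
    (hpw : T.Pairwise fun a b => G.Adj a b → φ b ≠ β a) : RecolorableWithin G L T.count φ β := by
  induction T generalizing φ with
  | nil =>
    obtain rfl : φ = β := funext fun t => heq t List.not_mem_nil
    exact .refl G L φ
  | cons u T ih =>
    obtain ⟨huT, hT⟩ := List.nodup_cons.1 hT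
    obtain ⟨hpwu, hpw⟩ := List.pairwise_cons.1 hpw
    have hstep : RecolorableWithin G L (Pi.single u 1) φ (Function.update φ u (β u)) := by
      refine .update (hβ.1 u) fun t hut => ?_
      by_cases ht : t ∈ T
      · exact hpwu t ht hut
      · rw [heq t (by simp [ht, hut.ne'])]
        exact hβ.2 hut.symm
    refine single_add_count u T ▸ hstep.trans (ih hT (fun t ht => ?_) ?_)
    · obtain rfl | htu := eq_or_ne t u
      · simp
      · simpa [htu] using heq t (by simp [ht, htu])
    · refine hpw.imp_of_mem fun {a b} _ hb h hab => ?_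
      rw [Function.update_of_ne (ne_of_mem_of_not_mem hb huT)]
      exact h hab

/- First every vertex of `T` but the first moves away from the target colors of the vertices before
it; then the vertices of `T` take their target colors in order. -/
theorem RecolorableWithin.of_idxOf [G.LocallyFinite] {φ β : V → ℕ} {T : List V}
    (hβ : IsLColoring G L β) (hT : T.Nodup) (heq : ∀ t ∉ T, φ t = β t)
    (hidx : ∀ t ∈ T, G.degree t + T.idxOf t < (L t).card) :
    RecolorableWithin G L (T.tail.count + T.count) φ β := by
  obtain ⟨ψ, hrec, hψ⟩ := exists_recolorableWithin_forall_notMem (G := G) (L := L) (T := T.tail)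
    (F := fun t => (T.take (T.idxOf t)).map β) φ fun t ht => by
      simpa [List.idxOf_le_length] using hidx t (List.mem_of_mem_tail ht)
  refine hrec.trans (.of_pairwise hβ hT (fun t ht => ?_) ?_)
  · rw [hrec.eq_of_eq_zero (List.count_eq_zero.2 (mt List.mem_of_mem_tail ht)), heq t ht]
  · rw [List.pairwise_iff_getElem]
    intro i j hi hj hij _ hji
    refine hψ T[j] (T.getElem_mem_tail (Nat.ne_zero_of_lt hij) hj) ?_
    rw [hT.idxOf_getElem j hj, hji]
    exact List.mem_map_of_mem (List.mem_take_iff_getElem.2 ⟨i, by lia, rfl⟩)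

end Finish

theorem recolorableWithin_of_induce_compl {V : Type} [DecidableEq V] {G : SimpleGraph V}
    [G.LocallyFinite] {L : V → Finset ℕ} {S : Finset V} {m : V → ℕ} {B : Budget V} {T : List V}
    {k : ℕ} {α β : V → ℕ} (hβ : IsLColoring G L β)
    (hm : ∀ s ∈ S, 0 < m s ∧ G.degree s + m s < (L s).card)
    (hadj : ∀ u ∈ S, ∀ q ∈ S, B.aid u q ≠ 0 → G.Adj u q) (hTS : ∀ t, t ∈ T ↔ t ∈ S)
    (hT : T.Nodup) (hpw : T.Pairwise fun a b => B.aid b a = 0)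
    (hidx : ∀ t ∈ T, G.degree t + T.idxOf t < (L t).card)
    (hcov : ∀ s ∈ S, (G.neighborFinset s \ S).card * k + min (B.assists S s) (B.aided S s) ≤
      m s * B.plain s + (m s + 1) * B.aided S s)
    (htotal : ∀ s ∈ S, B.total S s + (T.tail.count s + 1) ≤ k)
    (h : RecolorableWithin (G.induce (S : Set V)ᶜ) (fun u => L u) (fun _ => k)
      (fun u => α u) fun u => β u) :
    RecolorableWithin G L (fun _ => k) α β := by
  obtain ⟨ms, hms, hcount⟩ := h
  obtain ⟨n, ψ, hrec, hψ, hn, hn'⟩ := exists_recolorableWithin_of_isRecoloring_induce hm hadj hTS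
    hT hpw hms (fun _ => rfl) fun s hs =>
      .of_length_add_le (hm s hs).1
        ((Nat.add_le_add_right (length_demands ms s hcount) _).trans (hcov s hs))
  have hfinish : RecolorableWithin G L (T.tail.count + T.count) ψ β :=
    .of_idxOf hβ hT (fun t ht => (hψ ⟨t, by simpa [hTS] using ht⟩).symm) hidx
  refine (hrec.trans hfinish).mono fun t => ?_
  by_cases ht : t ∈ S
  · rw [Pi.add_apply, Pi.add_apply, List.count_eq_one_of_mem hT ((hTS t).2 ht)]
    exact (Nat.add_le_add_right (hn t ht) _).trans (htotal t ht)
  · have htT : t ∉ T := mt (hTS t).1 ht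
    simpa [List.count_eq_zero.2 htT, List.count_eq_zero.2 (mt List.mem_of_mem_tail htT)] using
      (hn' ⟨t, ht⟩).trans (hcount _)

theorem card_neighborFinset_sdiff_add_card_le {V : Type*} [DecidableEq V] (G : SimpleGraph V)
    [G.LocallyFinite] {s : V} {I S : Finset V} (hIS : I ⊆ S) (hI : ∀ t ∈ I, G.Adj s t) :
    (G.neighborFinset s \ S).card + I.card ≤ G.degree s := by
  have hI : I ⊆ G.neighborFinset s := fun t ht => (G.mem_neighborFinset s t).2 (hI t ht)
  calc (G.neighborFinset s \ S).card + I.card ≤ (G.neighborFinset s \ I).card + I.card := by gcongr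
    _ = G.degree s := Finset.card_sdiff_add_card_eq_card hI

/-- The reducible configuration: the triangles `wxy` and `xyz` share the edge `xy`, and `v` is
attached to `w`. The degrees are only bounded from above, since smaller ones make recoloring
easier. -/
structure IsGadget {V : Type} (G : SimpleGraph V) [G.LocallyFinite] (v w x y z : V) : Prop where
  nodup : [v, w, x, y, z].Nodup
  adj_vw : G.Adj v w
  adj_wx : G.Adj w x
  adj_wy : G.Adj w y
  adj_xy : G.Adj x y
  adj_xz : G.Adj x z
  adj_yz : G.Adj y z
  degree_v : G.degree v ≤ 5
  degree_w : G.degree w ≤ 6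
  degree_x : G.degree x ≤ 6
  degree_y : G.degree y ≤ 6
  degree_z : G.degree z ≤ 5

section Gadget

variable {V : Type} [DecidableEq V] {v w x y z : V}

/-- The budget for the gadget with vertices `v, w, x, y, z`. The vertex `z` needs no aid, since it
has three outer neighbors and looks ahead at four demands at a time. The aid that each of the other
vertices gets makes up for the recolorings it loses to its own assists and to the final phase. -/
def gadgetBudget (v w x y z : V) (k : ℕ) : Budget V where
  plain u := if u = v then k - 5 else if u = w then k - 28 else if u = z then k - 102 else k - 63
  aid := Pi.single v (Pi.single w 4) + Pi.single w (Pi.single x 11 + Pi.single y 11) +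
    Pi.single x (Pi.single z 50) + Pi.single y (Pi.single z 50)

/-- The number of demands that a vertex of the gadget looks ahead at, namely its number of colors
minus one more than its degree. -/
def gadgetLookahead (v z : V) : V → ℕ := fun u => if u = v ∨ u = z then 4 else 3

theorem map_gadgetLookahead (hnodup : [v, w, x, y, z].Nodup) :
    [v, w, x, y, z].map (gadgetLookahead v z) = [4, 3, 3, 3, 4] := by
  simp only [List.nodup_cons, List.mem_cons, List.not_mem_nil, or_false, not_or] at hnodup
  simp [gadgetLookahead, hnodup, Ne.symm]

theorem map_plain_gadgetBudget (hnodup : [v, w, x, y, z].Nodup) (k : ℕ) :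
    [v, w, x, y, z].map (gadgetBudget v w x y z k).plain =
      [k - 5, k - 28, k - 63, k - 63, k - 102] := by
  simp only [List.nodup_cons, List.mem_cons, List.not_mem_nil, or_false, not_or] at hnodup
  simp [gadgetBudget, hnodup, Ne.symm]

theorem map_aided_gadgetBudget (hnodup : [v, w, x, y, z].Nodup) (k : ℕ) :
    [v, w, x, y, z].map ((gadgetBudget v w x y z k).aided {v, w, x, y, z}) =
      [4, 22, 50, 50, 0] := by
  simp only [List.nodup_cons, List.mem_cons, List.not_mem_nil, or_false, not_or] at hnodup
  simp [gadgetBudget, Budget.aided, hnodup, Ne.symm, Pi.single_apply]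

theorem map_assists_gadgetBudget (hnodup : [v, w, x, y, z].Nodup) (k : ℕ) :
    [v, w, x, y, z].map ((gadgetBudget v w x y z k).assists {v, w, x, y, z}) =
      [0, 4, 11, 11, 100] := by
  simp only [List.nodup_cons, List.mem_cons, List.not_mem_nil, or_false, not_or] at hnodup
  simp [gadgetBudget, Budget.assists, hnodup, Ne.symm, Pi.single_apply]

theorem pairwise_aid_gadgetBudget (hnodup : [v, w, x, y, z].Nodup) (k : ℕ) :
    [v, w, x, y, z].Pairwise fun a b => (gadgetBudget v w x y z k).aid b a = 0 := by
  simp only [List.nodup_cons, List.mem_cons, List.not_mem_nil, or_false, not_or] at hnodup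
  simp [gadgetBudget, hnodup, Ne.symm, Pi.single_apply]

namespace IsGadget

variable {G : SimpleGraph V} [G.LocallyFinite]

theorem adj_of_aid_gadgetBudget_ne_zero (hG : IsGadget G v w x y z) (k : ℕ) {u q : V}
    (h : (gadgetBudget v w x y z k).aid u q ≠ 0) : G.Adj u q := by
  have := hG.adj_vw
  have := hG.adj_wx
  have := hG.adj_wy
  have := hG.adj_xz
  have := hG.adj_yz
  simp only [gadgetBudget, Pi.add_apply, Pi.single_apply, ite_apply, Pi.zero_apply] at h
  grind

theorem card_neighborFinset_sdiff_le (hG : IsGadget G v w x y z) :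
    [v, w, x, y, z].Forall₂ (fun s d => (G.neighborFinset s \ {v, w, x, y, z}).card ≤ d)
      [4, 3, 3, 3, 3] := by
  have hv := card_neighborFinset_sdiff_add_card_le G (s := v) (I := {w}) (S := {v, w, x, y, z})
    (by simp) (by simp [hG.adj_vw])
  have hw := card_neighborFinset_sdiff_add_card_le G (s := w) (I := {v, x, y})
    (S := {v, w, x, y, z}) (by grind) (by simp [hG.adj_vw.symm, hG.adj_wx, hG.adj_wy])
  have hx := card_neighborFinset_sdiff_add_card_le G (s := x) (I := {w, y, z})
    (S := {v, w, x, y, z}) (by grind) (by simp [hG.adj_wx.symm, hG.adj_xy, hG.adj_xz])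
  have hy := card_neighborFinset_sdiff_add_card_le G (s := y) (I := {w, x, z})
    (S := {v, w, x, y, z}) (by grind) (by simp [hG.adj_wy.symm, hG.adj_xy.symm, hG.adj_yz])
  have hz := card_neighborFinset_sdiff_add_card_le G (s := z) (I := {x, y})
    (S := {v, w, x, y, z}) (by grind) (by simp [hG.adj_xz.symm, hG.adj_yz.symm])
  obtain ⟨hnodup, -, -, -, -, -, -, hdv, hdw, hdx, hdy, hdz⟩ := hG
  simp only [List.nodup_cons, List.mem_cons, List.not_mem_nil, or_false, not_or] at hnodup
  simp only [List.forall₂_cons, List.Forall₂.nil]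
  grind

theorem demands_le_budget (hG : IsGadget G v w x y z) {k : ℕ} (hk : 408 ≤ k) {s : V}
    (hs : s ∈ ({v, w, x, y, z} : Finset V)) :
    (G.neighborFinset s \ {v, w, x, y, z}).card * k +
        min ((gadgetBudget v w x y z k).assists {v, w, x, y, z} s)
          ((gadgetBudget v w x y z k).aided {v, w, x, y, z} s) ≤
      gadgetLookahead v z s * (gadgetBudget v w x y z k).plain s +
        (gadgetLookahead v z s + 1) * (gadgetBudget v w x y z k).aided {v, w, x, y, z} s := by
  have houter := hG.card_neighborFinset_sdiff_le.imp fun _ _ h => Nat.mul_le_mul_right k h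
  have hahead := map_gadgetLookahead hG.nodup
  have hplain := map_plain_gadgetBudget hG.nodup k
  have haided := map_aided_gadgetBudget hG.nodup k
  have hassists := map_assists_gadgetBudget hG.nodup k
  simp only [List.map_cons, List.map_nil, List.cons.injEq, and_true]
    at hahead hplain haided hassists
  simp only [List.forall₂_cons, List.Forall₂.nil, and_true] at houter
  revert s
  simp only [Finset.mem_insert, Finset.mem_singleton, forall_eq_or_imp, forall_eq, hahead, hplain,
    haided, hassists]
  lia

theorem total_gadgetBudget_add_count_le (hnodup : [v, w, x, y, z].Nodup) {k : ℕ} (hk : 102 ≤ k)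
    {s : V} (hs : s ∈ ({v, w, x, y, z} : Finset V)) :
    (gadgetBudget v w x y z k).total {v, w, x, y, z} s + ([w, x, y, z].count s + 1) ≤ k := by
  have hplain := map_plain_gadgetBudget hnodup k
  have haided := map_aided_gadgetBudget hnodup k
  have hassists := map_assists_gadgetBudget hnodup k
  have hcount : [v, w, x, y, z].map [w, x, y, z].count = [0, 1, 1, 1, 1] := by
    simp only [List.nodup_cons, List.mem_cons, List.not_mem_nil, or_false, not_or] at hnodup
    simp [hnodup, Ne.symm, List.count_cons]
  simp only [List.map_cons, List.map_nil, List.cons.injEq, and_true]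
    at hplain haided hassists hcount
  revert s
  simp only [Finset.mem_insert, Finset.mem_singleton, forall_eq_or_imp, forall_eq, Budget.total,
    hplain, haided, hassists, hcount]
  lia

theorem degree_add_lookahead_lt (hG : IsGadget G v w x y z) {s : V}
    (hs : s ∈ ({v, w, x, y, z} : Finset V)) :
    0 < gadgetLookahead v z s ∧ G.degree s + gadgetLookahead v z s < 10 := by
  have hahead := map_gadgetLookahead hG.nodup
  simp only [List.map_cons, List.map_nil, List.cons.injEq, and_true] at hahead
  obtain ⟨-, -, -, -, -, -, -, hv, hw, hx, hy, hz⟩ := hG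
  revert s
  simp only [Finset.mem_insert, Finset.mem_singleton, forall_eq_or_imp, forall_eq, hahead]
  lia

theorem degree_add_idxOf_lt (hG : IsGadget G v w x y z) {s : V}
    (hs : s ∈ ({v, w, x, y, z} : Finset V)) :
    G.degree s + [v, w, x, y, z].idxOf s < 10 := by
  obtain ⟨hnodup, -, -, -, -, -, -, hv, hw, hx, hy, hz⟩ := hG
  have hidx : [v, w, x, y, z].map [v, w, x, y, z].idxOf = [0, 1, 2, 3, 4] := by
    simp only [List.nodup_cons, List.mem_cons, List.not_mem_nil, or_false, not_or] at hnodup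
    simp [hnodup, List.idxOf_cons_ne]
  simp only [List.map_cons, List.map_nil, List.cons.injEq, and_true] at hidx
  revert s
  simp only [Finset.mem_insert, Finset.mem_singleton, forall_eq_or_imp, forall_eq, hidx]
  lia

theorem recolorableWithin (hG : IsGadget G v w x y z) {L : V → Finset ℕ} {α β : V → ℕ} {k : ℕ}
    (hk : 408 ≤ k) (hL : ∀ u ∈ ({v, w, x, y, z} : Finset V), 10 ≤ (L u).card)
    (hβ : IsLColoring G L β)
    (h : RecolorableWithin (G.induce (({v, w, x, y, z} : Finset V) : Set V)ᶜ) (fun u => L u)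
      (fun _ => k) (fun u => α u) fun u => β u) :
    RecolorableWithin G L (fun _ => k) α β :=
  recolorableWithin_of_induce_compl (T := [v, w, x, y, z]) hβ
    (fun s hs => ⟨(hG.degree_add_lookahead_lt hs).1,
      (hG.degree_add_lookahead_lt hs).2.trans_le (hL s hs)⟩)
    (fun _ _ _ _ => hG.adj_of_aid_gadgetBudget_ne_zero k) (by simp) hG.nodup
    (pairwise_aid_gadgetBudget hG.nodup k)
    (fun s hs => (hG.degree_add_idxOf_lt (by simpa using hs)).trans_le (hL s (by simpa using hs)))
    (fun _ => hG.demands_le_budget hk)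
    (fun _ => total_gadgetBudget_add_count_le hG.nodup (by lia)) h

end IsGadget

end Gadget

end Recoloring

open Recoloring in
theorem stmt_4_general {V : Type} (G : SimpleGraph V) [G.LocallyFinite] (k : ℕ) (hk : 408 ≤ k)
    (L : V → Finset ℕ) (α β : V → ℕ) (hα : IsLColoring G L α) (hβ : IsLColoring G L β)
    (v w x y z : V) (hG : IsGadget G v w x y z) (S : Set V) (hS : S = {v, w, x, y, z})
    (hL : ∀ u ∈ S, 10 ≤ (L u).card)
    (hrec : ∃ (m : ℕ) (φ : Fin (m + 1) → ↥(Sᶜ) → ℕ),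
      IsRecolSeq (G.induce Sᶜ) (fun u => L u.1) φ (fun u => α u.1) (fun u => β u.1) ∧
      ∀ u : ↥(Sᶜ), recolorCount φ u ≤ k) :
    ∃ (M : ℕ) (ψ : Fin (M + 1) → V → ℕ),
      IsRecolSeq G L ψ α β ∧ ∀ u : V, recolorCount ψ u ≤ k := by
  classical
  obtain rfl : S = (({v, w, x, y, z} : Finset V) : Set V) := by simp [hS]
  have hα' : IsLColoring (G.induce (({v, w, x, y, z} : Finset V) : Set V)ᶜ) (fun u => L u)
      fun u => α u := ⟨fun u => hα.1 u, fun _ _ h => hα.2 h⟩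
  exact (recolorableWithin_iff_exists_isRecolSeq hα).1 <| hG.recolorableWithin hk hL hβ <|
    (recolorableWithin_iff_exists_isRecolSeq hα').2 hrec

/-- the configuration of Figure 2 (a 5-vertex path-like gadget with
degrees 5,6,6,6,5) is reducible: a `k`-good recoloring sequence in `G − S`
extends to a `k`-good recoloring sequence in `G`, for `k ≥ 416`. -/
theorem stmt_4 {V : Type} [Fintype V] [DecidableEq V]
    (G : SimpleGraph V) [DecidableRel G.Adj]
    (k : ℕ) (hk : 416 ≤ k)
    (L : V → Finset ℕ) (hL : ∀ u, (L u).card = 10)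
    (α β : V → ℕ) (hα : IsLColoring G L α) (hβ : IsLColoring G L β)
    (v w x y z : V) (hnodup : ([v, w, x, y, z] : List V).Nodup)
    (e1 : G.Adj v w) (e2 : G.Adj w x) (e3 : G.Adj w y) (e4 : G.Adj x y)
    (e5 : G.Adj x z) (e6 : G.Adj y z)
    (dv : G.degree v = 5) (dz : G.degree z = 5)
    (dw : G.degree w = 6) (dx : G.degree x = 6) (dy : G.degree y = 6)
    (S : Set V) (hS : S = {v, w, x, y, z})
    (hrec : ∃ (m : ℕ) (φ : Fin (m + 1) → ↥(Sᶜ) → ℕ),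
      IsRecolSeq (G.induce Sᶜ) (fun u => L u.1) φ (fun u => α u.1) (fun u => β u.1) ∧
      ∀ u : ↥(Sᶜ), recolorCount φ u ≤ k) :
    ∃ (M : ℕ) (ψ : Fin (M + 1) → V → ℕ),
      IsRecolSeq G L ψ α β ∧ ∀ u : V, recolorCount ψ u ≤ k :=
  stmt_4_general G k (by lia) L α β hα hβ v w x y z
    ⟨hnodup, e1, e2, e3, e4, e5, e6, dv.le, dw.le, dx.le, dy.le, dz.le⟩ S hS
    (fun u _ => (hL u).ge) hrec
end
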